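/- arXiv:1104.1843 — 7 statements merged into one kernel-verified Lean document; each statement's English description precedes it below -/
import Mathlib

section
/- Let ρ be as in the context, assumed positive semidefinite with |s| < 1. For the measurement in the computational basis of the second qubit, i.e. B₀ = |0⟩⟨0|, B₁ = |1⟩⟨1|, one has p₀ = Tr[(I⊗B₀)ρ(I⊗B₀)] = (1+s)/2, p₁ = Tr[(I⊗B₁)ρ(I⊗B₁)] = (1−s)/2, and the conditional entropy p₀S(ρ₀) + p₁S(ρ₁), where ρ_k = (I⊗B_k)ρ(I⊗B_k)/p_k, equals S₁ = −[(1+r+s+c₃)/4]log₂[(1+r+s+c₃)/(2(1+s))] − [(1−r+s−c₃)/4]log₂[(1−r+s−c₃)/(2(1+s))] − [(1+r−s−c₃)/4]log₂[(1+r−s−c₃)/(2(1−s))] − [(1−r−s+c₃)/4]log₂[(1−r−s+c₃)/(2(1−s))]. -/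
open Matrix Polynomial
open scoped Kronecker ComplexOrder

noncomputable section

/-- 2×2 complex matrices. -/
abbrev M2 : Type := Matrix (Fin 2) (Fin 2) ℂ
/-- 4×4 complex matrices, indexed by pairs (two-qubit operators). -/
abbrev M4 : Type := Matrix (Fin 2 × Fin 2) (Fin 2 × Fin 2) ℂ

/-- Pauli matrix σ₁. -/
def σ1 : M2 := !![0, 1; 1, 0]
/-- Pauli matrix σ₂. -/
def σ2 : M2 := !![0, -Complex.I; Complex.I, 0]
/-- Pauli matrix σ₃. -/
def σ3 : M2 := !![1, 0; 0, -1]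

/-- f(t) = −((1−t)/2)·log₂(1−t) − ((1+t)/2)·log₂(1+t); the convention
0·log₂0 = 0 is automatic since `Real.logb 2 0 = 0`. -/
def f (t : ℝ) : ℝ :=
  -((1 - t) / 2) * Real.logb 2 (1 - t) - ((1 + t) / 2) * Real.logb 2 (1 + t)

/-- Von Neumann entropy (base 2): −Σ λᵢ log₂ λᵢ over the eigenvalues of `X`
(the roots of the characteristic polynomial, with multiplicity; for a PSD
Hermitian matrix these are the real nonnegative eigenvalues). -/
def entropy {n : Type} [Fintype n] [DecidableEq n] (X : Matrix n n ℂ) : ℝ :=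
  -((X.charpoly.roots.map (fun z => z.re * Real.logb 2 z.re)).sum)

/-- The state ρ = (1/4)[I⊗I + r σ₃⊗I + s I⊗σ₃ + c₁ σ₁⊗σ₁ + c₂ σ₂⊗σ₂ + c₃ σ₃⊗σ₃]. -/
def rho (r s c1 c2 c3 : ℝ) : M4 :=
  (1 / 4 : ℂ) • ((1 : M2) ⊗ₖ (1 : M2) + (r : ℂ) • (σ3 ⊗ₖ (1 : M2))
    + (s : ℂ) • ((1 : M2) ⊗ₖ σ3) + (c1 : ℂ) • (σ1 ⊗ₖ σ1)
    + (c2 : ℂ) • (σ2 ⊗ₖ σ2) + (c3 : ℂ) • (σ3 ⊗ₖ σ3))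

/-- The state after the phase-flip channel:
ε_p(ρ) = (1/4)[I⊗I + r σ₃⊗I + s I⊗σ₃ + (1−p)²c₁ σ₁⊗σ₁ + (1−p)²c₂ σ₂⊗σ₂ + c₃ σ₃⊗σ₃]. -/
def epsRho (p r s c1 c2 c3 : ℝ) : M4 :=
  rho r s ((1 - p) ^ 2 * c1) ((1 - p) ^ 2 * c2) c3

/-- Partial trace over the second qubit. -/
def ptraceB (X : M4) : M2 := Matrix.of fun i j => ∑ k : Fin 2, X (i, k) (j, k)

/-- Partial trace over the first qubit. -/
def ptraceA (X : M4) : M2 := Matrix.of fun i j => ∑ k : Fin 2, X (k, i) (k, j)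

/-- (I⊗B) X (I⊗B): the (unnormalized) post-measurement operator. -/
def measOp (B : M2) (X : M4) : M4 :=
  ((1 : M2) ⊗ₖ B) * X * ((1 : M2) ⊗ₖ B)

/-- p_k = Tr[(I⊗B) X (I⊗B)] (real part). -/
def prob (B : M2) (X : M4) : ℝ := ((measOp B X).trace).re

/-- Conditional entropy p₀ S(ρ₀) + p₁ S(ρ₁) for the projective measurement {B, I−B}
on the second qubit, with ρ_k = (I⊗B_k) X (I⊗B_k) / p_k (with the convention that
a zero-probability outcome contributes 0, since then `(p_k)⁻¹ = 0`). -/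
def condEnt (X : M4) (B : M2) : ℝ :=
  prob B X * entropy (((prob B X : ℝ) : ℂ)⁻¹ • measOp B X)
    + prob (1 - B) X * entropy (((prob (1 - B) X : ℝ) : ℂ)⁻¹ • measOp (1 - B) X)

/-- B is a rank-one orthogonal projection on ℂ². -/
def IsRankOneProj (B : M2) : Prop := B.IsHermitian ∧ B * B = B ∧ B.rank = 1

lemma entropy_diagonal (d : Fin 2 × Fin 2 → ℝ) :
    entropy (Matrix.diagonal (fun i => ((d i : ℝ) : ℂ))) =
      -∑ i, d i * Real.logb 2 (d i) := by
  have h : (Matrix.diagonal (fun i => ((d i : ℝ) : ℂ))).charpoly.roots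
      = Finset.univ.val.map (fun i => ((d i : ℝ) : ℂ)) := by
    rw [Matrix.charpoly_diagonal]
    have := Polynomial.roots_multiset_prod_X_sub_C
      (Finset.univ.val.map (fun i : Fin 2 × Fin 2 => ((d i : ℝ) : ℂ)))
    rw [Multiset.map_map] at this
    exact this
  unfold entropy
  rw [h, Multiset.map_map]
  simp only [Function.comp_def, Complex.ofReal_re]
  rfl

lemma measOp_zero (r s c1 c2 c3 : ℝ) :
    measOp !![1, 0; 0, 0] (rho r s c1 c2 c3) = Matrix.diagonal (fun i : Fin 2 × Fin 2 =>
      (((!![(1 + r + s + c3) / 4, 0; (1 - r + s - c3) / 4, 0] : Matrix (Fin 2) (Fin 2) ℝ)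
        i.1 i.2 : ℝ) : ℂ)) := by
  ext ⟨i, j⟩ ⟨k, l⟩
  fin_cases i <;> fin_cases j <;> fin_cases k <;> fin_cases l <;>
    simp [measOp, rho, σ1, σ2, σ3, Matrix.mul_apply, Fintype.sum_prod_type, Matrix.one_apply,
      Matrix.diagonal_apply] <;> ring

lemma measOp_one (r s c1 c2 c3 : ℝ) :
    measOp (1 - !![1, 0; 0, 0]) (rho r s c1 c2 c3) = Matrix.diagonal (fun i : Fin 2 × Fin 2 =>
      (((!![0, (1 + r - s - c3) / 4; 0, (1 - r - s + c3) / 4] : Matrix (Fin 2) (Fin 2) ℝ)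
        i.1 i.2 : ℝ) : ℂ)) := by
  ext ⟨i, j⟩ ⟨k, l⟩
  fin_cases i <;> fin_cases j <;> fin_cases k <;> fin_cases l <;>
    simp [measOp, rho, σ1, σ2, σ3, Matrix.mul_apply, Fintype.sum_prod_type, Matrix.one_apply,
      Matrix.diagonal_apply] <;> ring

lemma entropy_smul_diagonal (p : ℝ) (d : Fin 2 × Fin 2 → ℝ) :
    entropy (((p : ℝ) : ℂ)⁻¹ • Matrix.diagonal (fun i => ((d i : ℝ) : ℂ))) =
      -∑ i, (p⁻¹ * d i) * Real.logb 2 (p⁻¹ * d i) := by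
  rw [← entropy_diagonal]
  congr 1
  ext i j
  by_cases h : i = j <;> simp [Matrix.diagonal_apply, h]

/-- for the computational-basis measurement B₀ = |0⟩⟨0|, B₁ = |1⟩⟨1| on the
second qubit, p₀ = (1+s)/2, p₁ = (1−s)/2, and the conditional entropy equals S₁. -/
theorem stmt1 (r s c1 c2 c3 : ℝ) (hρ : (rho r s c1 c2 c3).PosSemidef) (hs : |s| < 1) :
    prob !![1, 0; 0, 0] (rho r s c1 c2 c3) = (1 + s) / 2 ∧
    prob (1 - !![1, 0; 0, 0]) (rho r s c1 c2 c3) = (1 - s) / 2 ∧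
    condEnt (rho r s c1 c2 c3) !![1, 0; 0, 0] =
      (-((1 + r + s + c3) / 4 * Real.logb 2 ((1 + r + s + c3) / (2 * (1 + s))))
        - (1 - r + s - c3) / 4 * Real.logb 2 ((1 - r + s - c3) / (2 * (1 + s)))
        - (1 + r - s - c3) / 4 * Real.logb 2 ((1 + r - s - c3) / (2 * (1 - s)))
        - (1 - r - s + c3) / 4 * Real.logb 2 ((1 - r - s + c3) / (2 * (1 - s)))) := by
  have h0 : prob !![1, 0; 0, 0] (rho r s c1 c2 c3) = (1 + s) / 2 := by
    unfold prob
    rw [measOp_zero, Matrix.trace_diagonal, ← Complex.ofReal_sum, Complex.ofReal_re,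
      Fintype.sum_prod_type]
    simp
    ring
  have h1 : prob (1 - !![1, 0; 0, 0]) (rho r s c1 c2 c3) = (1 - s) / 2 := by
    unfold prob
    rw [measOp_one, Matrix.trace_diagonal, ← Complex.ofReal_sum, Complex.ofReal_re,
      Fintype.sum_prod_type]
    simp
    ring
  refine ⟨h0, h1, ?_⟩
  obtain ⟨hl, hu⟩ := abs_lt.mp hs
  have hp : 1 + s ≠ 0 := by linarith
  have hm : 1 - s ≠ 0 := by linarith
  have key : ∀ q x : ℝ, q ≠ 0 → (q / 2)⁻¹ * (x / 4) = x / (2 * q) := by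
    intro q x hq
    field_simp
    ring
  have key2 : ∀ q x y L M : ℝ, q ≠ 0 →
      q / 2 * -(x / (2 * q) * L + y / (2 * q) * M) = -(x / 4 * L) - y / 4 * M := by
    intro q x y L M hq
    field_simp
    ring
  unfold condEnt
  rw [h0, h1, measOp_zero, measOp_one, entropy_smul_diagonal, entropy_smul_diagonal,
    Fintype.sum_prod_type, Fintype.sum_prod_type]
  simp only [Fin.sum_univ_two, Matrix.of_apply, Matrix.cons_val', Matrix.cons_val_zero,
    Matrix.cons_val_one, Matrix.cons_val_fin_one, mul_zero, zero_mul, add_zero, zero_add,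
    key _ _ hp, key _ _ hm, key2 _ _ _ _ _ hp, key2 _ _ _ _ _ hm]
  ring
end
end

section
/- Let ρ be as in the context, assumed positive semidefinite. For the measurement in the σ₁ eigenbasis of the second qubit, i.e. B₀ = (1/2)(I+σ₁), B₁ = (1/2)(I−σ₁), one has p₀ = p₁ = 1/2 where p_k = Tr[(I⊗B_k)ρ(I⊗B_k)], and the conditional entropy p₀S(ρ₀) + p₁S(ρ₁), where ρ_k = (I⊗B_k)ρ(I⊗B_k)/p_k, equals S₂ = 1 + f(√(r²+c₁²)). -/
open Matrix Polynomial
open scoped Kronecker ComplexOrder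

noncomputable section

/-- The post-measurement state in Kronecker form (e = ±1 selects the outcome). -/
def postState (r c e : ℝ) : M4 :=
  (!![(1 + r) / 2, e * c / 2; e * c / 2, (1 - r) / 2] : M2) ⊗ₖ
    (!![1 / 2, e / 2; e / 2, 1 / 2] : M2)

lemma postState_charpoly (r c e t : ℝ) (he : e ^ 2 = 1) (ht : t ^ 2 = r ^ 2 + c ^ 2) :
    (postState r c e).charpoly =
      X * X * (X - C (((1 - t) / 2 : ℝ) : ℂ)) * (X - C (((1 + t) / 2 : ℝ) : ℂ)) := by
  have he' : (e : ℂ) ^ 2 = 1 := by exact_mod_cast he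
  have ht' : (t : ℂ) ^ 2 = r ^ 2 + c ^ 2 := by exact_mod_cast ht
  apply Polynomial.funext
  intro z
  rw [Matrix.eval_charpoly, ← Matrix.det_reindex_self (finProdFinEquiv (m := 2) (n := 2))]
  have hM : Matrix.reindex (finProdFinEquiv (m := 2) (n := 2)) finProdFinEquiv
      (Matrix.scalar (Fin 2 × Fin 2) z - postState r c e) =
      !![z - (1 + r) / 4, -((1 + r) * e / 4), -(e * c / 4), -(e * e * c / 4);
         -((1 + r) * e / 4), z - (1 + r) / 4, -(e * e * c / 4), -(e * c / 4);
         -(e * c / 4), -(e * e * c / 4), z - (1 - r) / 4, -((1 - r) * e / 4);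
         -(e * e * c / 4), -(e * c / 4), -((1 - r) * e / 4), z - (1 - r) / 4] := by
    ext i j
    fin_cases i <;> fin_cases j <;>
      simp [postState, finProdFinEquiv, Fin.divNat, Fin.modNat, Matrix.diagonal_apply] <;> ring
  have hee : (e : ℂ) * e = 1 := by rw [← he']; ring
  rw [hM]
  simp only [hee]
  simp [Matrix.det_succ_row_zero, Fin.sum_univ_succ, Fin.succAbove]
  have e4 : (e : ℂ) ^ 4 = 1 := by linear_combination (e ^ 2 + 1 : ℂ) * he'
  have e3 : (e : ℂ) ^ 3 = e := by linear_combination (e : ℂ) * he'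
  ring_nf
  simp only [he', e3, e4, ht']
  ring

lemma half_log (x : ℝ) :
    x / 2 * Real.logb 2 (x / 2) = x / 2 * Real.logb 2 x - x / 2 := by
  by_cases hx : x = 0
  · simp [hx]
  · rw [Real.logb_div hx (by norm_num), Real.logb_self_eq_one (by norm_num)]
    ring

lemma postState_entropy (r c e : ℝ) (he : e ^ 2 = 1) :
    entropy (postState r c e) = 1 + f (Real.sqrt (r ^ 2 + c ^ 2)) := by
  have ht : (Real.sqrt (r ^ 2 + c ^ 2)) ^ 2 = r ^ 2 + c ^ 2 := Real.sq_sqrt (by positivity)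
  generalize Real.sqrt (r ^ 2 + c ^ 2) = t at ht ⊢
  have hroots : (postState r c e).charpoly.roots =
      {0} + {0} + {(((1 - t) / 2 : ℝ) : ℂ)} + {(((1 + t) / 2 : ℝ) : ℂ)} := by
    have h1 := Polynomial.X_sub_C_ne_zero (((1 - t) / 2 : ℝ) : ℂ)
    have h2 := Polynomial.X_sub_C_ne_zero (((1 + t) / 2 : ℝ) : ℂ)
    have h0 : (X : ℂ[X]) ≠ 0 := Polynomial.X_ne_zero
    rw [postState_charpoly r c e t he ht,
      Polynomial.roots_mul (mul_ne_zero (mul_ne_zero (mul_ne_zero h0 h0) h1) h2),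
      Polynomial.roots_mul (mul_ne_zero (mul_ne_zero h0 h0) h1),
      Polynomial.roots_mul (mul_ne_zero h0 h0), Polynomial.roots_X_sub_C,
      Polynomial.roots_X_sub_C, Polynomial.roots_X]
  unfold entropy
  rw [hroots]
  simp only [Multiset.map_add, Multiset.map_singleton, Multiset.sum_add, Multiset.sum_singleton,
    Complex.ofReal_re, Complex.zero_re, half_log, f]
  ring

set_option maxHeartbeats 4000000 in
lemma measOp_plus (r s c1 c2 c3 : ℝ) :
    measOp ((1 / 2 : ℂ) • (1 + σ1)) (rho r s c1 c2 c3) = (1 / 2 : ℂ) • postState r c1 1 := by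
  ext ⟨i, k⟩ ⟨j, l⟩
  fin_cases i <;> fin_cases k <;> fin_cases j <;> fin_cases l <;>
    simp [measOp, rho, postState, σ1, σ2, σ3, Matrix.mul_apply, Fintype.sum_prod_type,
      Matrix.one_apply] <;> ring_nf <;> simp <;> ring

set_option maxHeartbeats 4000000 in
lemma measOp_minus (r s c1 c2 c3 : ℝ) :
    measOp (1 - (1 / 2 : ℂ) • (1 + σ1)) (rho r s c1 c2 c3) =
      (1 / 2 : ℂ) • postState r c1 (-1) := by
  ext ⟨i, k⟩ ⟨j, l⟩
  fin_cases i <;> fin_cases k <;> fin_cases j <;> fin_cases l <;>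
    simp [measOp, rho, postState, σ1, σ2, σ3, Matrix.mul_apply, Fintype.sum_prod_type,
      Matrix.one_apply] <;> ring_nf <;> simp <;> ring

lemma trace_half (r c e : ℝ) : (((1 / 2 : ℂ) • postState r c e).trace).re = 1 / 2 := by
  have h : ((1 / 2 : ℂ) • postState r c e).trace = ((1 / 2 : ℝ) : ℂ) := by
    simp [Matrix.trace, postState, Fintype.sum_prod_type]
    ring
  rw [h, Complex.ofReal_re]

/-- for the σ₁-eigenbasis measurement B₀ = (1/2)(I+σ₁), B₁ = (1/2)(I−σ₁)
on the second qubit, p₀ = p₁ = 1/2 and the conditional entropy is S₂ = 1 + f(√(r²+c₁²)). -/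
theorem stmt2 (r s c1 c2 c3 : ℝ) (hρ : (rho r s c1 c2 c3).PosSemidef) :
    prob ((1 / 2 : ℂ) • (1 + σ1)) (rho r s c1 c2 c3) = 1 / 2 ∧
    prob (1 - (1 / 2 : ℂ) • (1 + σ1)) (rho r s c1 c2 c3) = 1 / 2 ∧
    condEnt (rho r s c1 c2 c3) ((1 / 2 : ℂ) • (1 + σ1)) =
      1 + f (Real.sqrt (r ^ 2 + c1 ^ 2)) := by
  have hp : prob ((1 / 2 : ℂ) • (1 + σ1)) (rho r s c1 c2 c3) = 1 / 2 := by
    rw [prob, measOp_plus, trace_half]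
  have hm : prob (1 - (1 / 2 : ℂ) • (1 + σ1)) (rho r s c1 c2 c3) = 1 / 2 := by
    rw [prob, measOp_minus, trace_half]
  refine ⟨hp, hm, ?_⟩
  have hs : ∀ Y : M4, (((1 / 2 : ℝ) : ℂ))⁻¹ • ((1 / 2 : ℂ) • Y) = Y := by
    intro Y
    rw [smul_smul]
    norm_num
  rw [condEnt, hp, hm, measOp_plus, measOp_minus, hs, hs,
    postState_entropy _ _ _ (by norm_num), postState_entropy _ _ _ (by norm_num)]
  ring
end
end

section
/- Let ρ be as in the context. The multiset of eigenvalues of ρ (with multiplicity) is exactly {u₊, u₋, v₊, v₋}, where u± = (1/4)[1 − c₃ ± √((r−s)² + (c₁+c₂)²)] and v± = (1/4)[1 + c₃ ± √((r+s)² + (c₁−c₂)²)]. -/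
open Matrix Polynomial
open scoped Kronecker ComplexOrder

noncomputable section

/-- The matrix of ρ in the ordered product basis. -/
theorem rho_eq (r s c1 c2 c3 : ℝ) (t : ℂ) :
    (Matrix.scalar (Fin 2 × Fin 2) t - rho r s c1 c2 c3).submatrix
      ![(0, 0), (0, 1), (1, 0), (1, 1)] ![(0, 0), (0, 1), (1, 0), (1, 1)] =
    !![t - (1 + r + s + c3) / 4, 0, 0, -(c1 - c2) / 4;
       0, t - (1 + r - s - c3) / 4, -(c1 + c2) / 4, 0;
       0, -(c1 + c2) / 4, t - (1 - r + s - c3) / 4, 0;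
       -(c1 - c2) / 4, 0, 0, t - (1 - r - s + c3) / 4] := by
  ext i j
  fin_cases i <;> fin_cases j <;>
    simp [rho, σ1, σ2, σ3, Matrix.one_apply] <;> ring

/-- The ordering of the product basis. -/
def basisEquiv : Fin 4 ≃ Fin 2 × Fin 2 where
  toFun := ![(0, 0), (0, 1), (1, 0), (1, 1)]
  invFun := fun p => ![![0, 1], ![2, 3]] p.1 p.2
  left_inv := by intro i; fin_cases i <;> rfl
  right_inv := by rintro ⟨i, j⟩; fin_cases i <;> fin_cases j <;> rfl

theorem charpoly_eval (r s c1 c2 c3 : ℝ) (t : ℂ) :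
    (rho r s c1 c2 c3).charpoly.eval t =
      ((t - (1 + r + s + c3) / 4) * (t - (1 - r - s + c3) / 4) - ((c1 - c2) / 4) ^ 2) *
      ((t - (1 + r - s - c3) / 4) * (t - (1 - r + s - c3) / 4) - ((c1 + c2) / 4) ^ 2) := by
  rw [Matrix.eval_charpoly, ← Matrix.det_submatrix_equiv_self basisEquiv]
  have h := rho_eq r s c1 c2 c3 t
  change ((Matrix.scalar (Fin 2 × Fin 2) t - rho r s c1 c2 c3).submatrix
      ![(0, 0), (0, 1), (1, 0), (1, 1)] ![(0, 0), (0, 1), (1, 0), (1, 1)]).det = _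
  rw [h]
  simp [Matrix.det_succ_row_zero, Fin.sum_univ_succ, Fin.succAbove]
  ring

/-- the multiset of eigenvalues of ρ (roots of its characteristic
polynomial, with multiplicity) is {u₊, u₋, v₊, v₋}. -/
theorem stmt4 (r s c1 c2 c3 : ℝ) :
    (rho r s c1 c2 c3).charpoly.roots =
      {((1 / 4 * (1 - c3 + Real.sqrt ((r - s) ^ 2 + (c1 + c2) ^ 2)) : ℝ) : ℂ),
       ((1 / 4 * (1 - c3 - Real.sqrt ((r - s) ^ 2 + (c1 + c2) ^ 2)) : ℝ) : ℂ),
       ((1 / 4 * (1 + c3 + Real.sqrt ((r + s) ^ 2 + (c1 - c2) ^ 2)) : ℝ) : ℂ),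
       ((1 / 4 * (1 + c3 - Real.sqrt ((r + s) ^ 2 + (c1 - c2) ^ 2)) : ℝ) : ℂ)} := by
  have ha : (Real.sqrt ((r - s) ^ 2 + (c1 + c2) ^ 2) : ℂ) ^ 2 =
      ((r : ℂ) - s) ^ 2 + ((c1 : ℂ) + c2) ^ 2 := by
    exact_mod_cast congrArg (fun x : ℝ => (x : ℂ))
      (Real.sq_sqrt (by positivity : 0 ≤ (r - s) ^ 2 + (c1 + c2) ^ 2))
  have hb : (Real.sqrt ((r + s) ^ 2 + (c1 - c2) ^ 2) : ℂ) ^ 2 =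
      ((r : ℂ) + s) ^ 2 + ((c1 : ℂ) - c2) ^ 2 := by
    exact_mod_cast congrArg (fun x : ℝ => (x : ℂ))
      (Real.sq_sqrt (by positivity : 0 ≤ (r + s) ^ 2 + (c1 - c2) ^ 2))
  generalize Real.sqrt ((r - s) ^ 2 + (c1 + c2) ^ 2) = a at *
  generalize Real.sqrt ((r + s) ^ 2 + (c1 - c2) ^ 2) = b at *
  rw [← Polynomial.roots_multiset_prod_X_sub_C
    ({((1 / 4 * (1 - c3 + a) : ℝ) : ℂ), ((1 / 4 * (1 - c3 - a) : ℝ) : ℂ),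
      ((1 / 4 * (1 + c3 + b) : ℝ) : ℂ), ((1 / 4 * (1 + c3 - b) : ℝ) : ℂ)} : Multiset ℂ)]
  congr 1
  apply Polynomial.funext
  intro t
  rw [charpoly_eval]
  have e1 : ((t - (1 + r + s + c3) / 4) * (t - (1 - r - s + c3) / 4) - ((c1 - c2) / 4) ^ 2 : ℂ) =
      (t - 1 / 4 * (1 + c3 + b)) * (t - 1 / 4 * (1 + c3 - b)) := by
    linear_combination (1 / 16) * hb
  have e2 : ((t - (1 + r - s - c3) / 4) * (t - (1 - r + s - c3) / 4) - ((c1 + c2) / 4) ^ 2 : ℂ) =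
      (t - 1 / 4 * (1 - c3 + a)) * (t - 1 / 4 * (1 - c3 - a)) := by
    linear_combination (1 / 16) * ha
  rw [e1, e2]
  simp only [Multiset.insert_eq_cons, Multiset.map_cons, Multiset.map_singleton,
    Multiset.prod_cons, Multiset.prod_singleton, Polynomial.eval_mul, Polynomial.eval_sub,
    Polynomial.eval_X, Polynomial.eval_C]
  push_cast
  ring
end
end

section
/- Let ρ be as in the context and let ρ̃ = (σ₂⊗σ₂) ρ (σ₂⊗σ₂) (note ρ has real entries, so complex conjugation acts trivially). Then the multiset of eigenvalues of the matrix product ρρ̃ (with multiplicity) is exactly {λ₁, λ₂, λ₃, λ₄}, where λ₁ = (1/16)(c₁−c₂−√((1+c₃)²−(r+s)²))², λ₂ = (1/16)(c₁−c₂+√((1+c₃)²−(r+s)²))², λ₃ = (1/16)(c₁+c₂−√((1−c₃)²−(r−s)²))², λ₄ = (1/16)(c₁+c₂+√((1−c₃)²−(r−s)²))², under the assumptions (1+c₃)² ≥ (r+s)² and (1−c₃)² ≥ (r−s)². -/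
open Matrix Polynomial
open scoped Kronecker ComplexOrder

noncomputable section

/-- Determinant of an X-shaped 4×4 matrix. -/
lemma det_xshape {R : Type*} [CommRing R] (a b c d e g h k : R) :
    (!![a, 0, 0, b; 0, c, d, 0; 0, e, g, 0; h, 0, 0, k] : Matrix (Fin 4) (Fin 4) R).det
      = (a * k - b * h) * (c * g - d * e) := by
  simp [Matrix.det_succ_row_zero, Fin.sum_univ_succ, Fin.succAbove]
  ring

/-- X-shaped two-qubit matrix. -/
def xmat (a b c d e g h k : ℂ) : M4 :=
  (!![a, 0, 0, b; 0, c, d, 0; 0, e, g, 0; h, 0, 0, k] : Matrix (Fin 4) (Fin 4) ℂ).submatrix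
    finProdFinEquiv finProdFinEquiv

lemma xmat_mul (a b c d e g h k a' b' c' d' e' g' h' k' : ℂ) :
    xmat a b c d e g h k * xmat a' b' c' d' e' g' h' k' =
      xmat (a * a' + b * h') (a * b' + b * k') (c * c' + d * e') (c * d' + d * g')
        (e * c' + g * e') (e * d' + g * g') (h * a' + k * h') (h * b' + k * k') := by
  unfold xmat
  rw [Matrix.submatrix_mul_equiv]
  congr 1
  ext i j
  fin_cases i <;> fin_cases j <;> simp [Matrix.mul_apply, Fin.sum_univ_four]

lemma xmat_charpoly (a b c d e g h k : ℂ) :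
    (xmat a b c d e g h k).charpoly =
      ((X - C a) * (X - C k) - C b * C h) * ((X - C c) * (X - C g) - C d * C e) := by
  have : xmat a b c d e g h k = Matrix.reindex finProdFinEquiv.symm finProdFinEquiv.symm
      (!![a, 0, 0, b; 0, c, d, 0; 0, e, g, 0; h, 0, 0, k] : Matrix (Fin 4) (Fin 4) ℂ) := rfl
  rw [this, Matrix.charpoly_reindex, Matrix.charpoly]
  have h2 : (!![a, 0, 0, b; 0, c, d, 0; 0, e, g, 0; h, 0, 0, k] :
      Matrix (Fin 4) (Fin 4) ℂ).charmatrix =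
      !![X - C a, 0, 0, - C b; 0, X - C c, - C d, 0; 0, - C e, X - C g, 0;
        - C h, 0, 0, X - C k] := by
    ext1 i j
    fin_cases i <;> fin_cases j <;> simp [Matrix.charmatrix_apply, Matrix.diagonal]
  rw [h2, det_xshape]
  ring

lemma sigma_xmat : σ2 ⊗ₖ σ2 = xmat 0 (-1) 0 1 1 0 (-1) 0 := by
  ext ⟨i, i'⟩ ⟨j, j'⟩
  fin_cases i <;> fin_cases i' <;> fin_cases j <;> fin_cases j' <;>
    simp [xmat, σ2, finProdFinEquiv, Matrix.kroneckerMap_apply]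

lemma rho_xmat (r s c1 c2 c3 : ℝ) : rho r s c1 c2 c3 =
    xmat ((1 + r + s + c3) / 4) ((c1 - c2) / 4) ((1 + r - s - c3) / 4) ((c1 + c2) / 4)
      ((c1 + c2) / 4) ((1 - r + s - c3) / 4) ((c1 - c2) / 4) ((1 - r - s + c3) / 4) := by
  ext ⟨i, i'⟩ ⟨j, j'⟩
  fin_cases i <;> fin_cases i' <;> fin_cases j <;> fin_cases j' <;>
    simp [rho, xmat, σ1, σ2, σ3, finProdFinEquiv, Matrix.kroneckerMap_apply] <;> ring

/-- the multiset of eigenvalues of ρρ̃, with ρ̃ = (σ₂⊗σ₂)ρ(σ₂⊗σ₂),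
is {λ₁, λ₂, λ₃, λ₄}. -/
theorem stmt5 (r s c1 c2 c3 : ℝ)
    (h1 : (r + s) ^ 2 ≤ (1 + c3) ^ 2) (h2 : (r - s) ^ 2 ≤ (1 - c3) ^ 2) :
    ((rho r s c1 c2 c3) *
      ((σ2 ⊗ₖ σ2) * (rho r s c1 c2 c3) * (σ2 ⊗ₖ σ2))).charpoly.roots =
      {((1 / 16 * (c1 - c2 - Real.sqrt ((1 + c3) ^ 2 - (r + s) ^ 2)) ^ 2 : ℝ) : ℂ),
       ((1 / 16 * (c1 - c2 + Real.sqrt ((1 + c3) ^ 2 - (r + s) ^ 2)) ^ 2 : ℝ) : ℂ),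
       ((1 / 16 * (c1 + c2 - Real.sqrt ((1 - c3) ^ 2 - (r - s) ^ 2)) ^ 2 : ℝ) : ℂ),
       ((1 / 16 * (c1 + c2 + Real.sqrt ((1 - c3) ^ 2 - (r - s) ^ 2)) ^ 2 : ℝ) : ℂ)} := by
  have q1 : ((Real.sqrt ((1 + c3) ^ 2 - (r + s) ^ 2) : ℝ) : ℂ) ^ 2
      = (1 + c3) ^ 2 - (r + s) ^ 2 := by
    have := Real.sq_sqrt (sub_nonneg.2 h1)
    exact_mod_cast this
  have q2 : ((Real.sqrt ((1 - c3) ^ 2 - (r - s) ^ 2) : ℝ) : ℂ) ^ 2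
      = (1 - c3) ^ 2 - (r - s) ^ 2 := by
    have := Real.sq_sqrt (sub_nonneg.2 h2)
    exact_mod_cast this
  generalize Real.sqrt ((1 + c3) ^ 2 - (r + s) ^ 2) = u at *
  generalize Real.sqrt ((1 - c3) ^ 2 - (r - s) ^ 2) = v at *
  set T : Multiset ℂ := _
  rw [show ((_ : M4)).charpoly = (Multiset.map (fun a => X - C a) T).prod from ?_]
  · exact Polynomial.roots_multiset_prod_X_sub_C T
  rw [rho_xmat, sigma_xmat, xmat_mul, xmat_mul, xmat_mul, xmat_charpoly]
  simp only [T, Multiset.insert_eq_cons, Multiset.map_cons, Multiset.map_singleton,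
    Multiset.prod_cons, Multiset.prod_singleton]
  rw [← mul_assoc]
  apply Polynomial.funext
  intro t
  simp only [eval_mul, eval_sub, eval_X, eval_C]
  push_cast
  congr 1
  · linear_combination ((-32 * t - 2 * ((c1:ℂ) - c2) ^ 2 + (u:ℂ)^2 + (1 + c3) ^ 2 - (r + s) ^ 2)) / 256 * (-1) * q1
  · linear_combination ((-32 * t - 2 * ((c1:ℂ) + c2) ^ 2 + (v:ℂ)^2 + (1 - c3) ^ 2 - (r - s) ^ 2)) / 256 * (-1) * q2
end
end

section
/- Let r, c₁, c₃ be real numbers and 0 ≤ p ≤ 1, and let ε_p(ρ) be as in the context with s = c₃·r and c₂ = −c₃·c₁. Then the multiset of eigenvalues of ε_p(ρ) (with multiplicity) is exactly {u₊, u₋, v₊, v₋}, where u± = ((1−c₃)/4)(1 ± √(r² + (1−p)⁴c₁²)) and v± = ((1+c₃)/4)(1 ± √(r² + (1−p)⁴c₁²)). -/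
open Matrix Polynomial
open scoped Kronecker ComplexOrder

noncomputable section

/-- Determinant of a 4×4 matrix indexed by pairs of X shape. -/
theorem det_X_shape (M : M4)
    (h1 : M (0,0) (0,1) = 0) (h2 : M (0,0) (1,0) = 0)
    (h3 : M (0,1) (0,0) = 0) (h4 : M (0,1) (1,1) = 0)
    (h5 : M (1,0) (0,0) = 0) (h6 : M (1,0) (1,1) = 0)
    (h7 : M (1,1) (0,1) = 0) (h8 : M (1,1) (1,0) = 0) :
    M.det = (M (0,0) (0,0) * M (1,1) (1,1) - M (0,0) (1,1) * M (1,1) (0,0)) *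
      (M (0,1) (0,1) * M (1,0) (1,0) - M (0,1) (1,0) * M (1,0) (0,1)) := by
  have e0 : (finProdFinEquiv (m := 2) (n := 2)).symm 0 = (0,0) := by decide
  have e1 : (finProdFinEquiv (m := 2) (n := 2)).symm 1 = (0,1) := by decide
  have e2 : (finProdFinEquiv (m := 2) (n := 2)).symm 2 = (1,0) := by decide
  have e3 : (finProdFinEquiv (m := 2) (n := 2)).symm 3 = (1,1) := by decide
  have hM : Matrix.reindex finProdFinEquiv finProdFinEquiv M =
      !![M (0,0) (0,0), 0, 0, M (0,0) (1,1);
         0, M (0,1) (0,1), M (0,1) (1,0), 0;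
         0, M (1,0) (0,1), M (1,0) (1,0), 0;
         M (1,1) (0,0), 0, 0, M (1,1) (1,1)] := by
    ext i j
    change M (finProdFinEquiv.symm i) (finProdFinEquiv.symm j) = _
    change Fin 4 at i j
    fin_cases i <;> fin_cases j <;>
      simp [e0, e1, e2, e3, h1, h2, h3, h4, h5, h6, h7, h8]
  rw [← Matrix.det_reindex_self finProdFinEquiv M, hM]
  change Matrix.det (n := Fin 4) _ = _
  simp [Matrix.det_succ_row_zero, Fin.sum_univ_succ, Fin.succAbove]
  ring

/-- with s = c₃r and c₂ = −c₃c₁, the eigenvalues of ε_p(ρ) are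
u± = ((1−c₃)/4)(1 ± √(r² + (1−p)⁴c₁²)) and v± = ((1+c₃)/4)(1 ± √(r² + (1−p)⁴c₁²)). -/
theorem stmt9 (r c1 c3 p : ℝ) (hp0 : 0 ≤ p) (hp1 : p ≤ 1) :
    (epsRho p r (c3 * r) c1 (-(c3 * c1)) c3).charpoly.roots =
      {(((1 - c3) / 4 * (1 + Real.sqrt (r ^ 2 + (1 - p) ^ 4 * c1 ^ 2)) : ℝ) : ℂ),
       (((1 - c3) / 4 * (1 - Real.sqrt (r ^ 2 + (1 - p) ^ 4 * c1 ^ 2)) : ℝ) : ℂ),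
       (((1 + c3) / 4 * (1 + Real.sqrt (r ^ 2 + (1 - p) ^ 4 * c1 ^ 2)) : ℝ) : ℂ),
       (((1 + c3) / 4 * (1 - Real.sqrt (r ^ 2 + (1 - p) ^ 4 * c1 ^ 2)) : ℝ) : ℂ)} := by
  have hs : ((Real.sqrt (r ^ 2 + (1 - p) ^ 4 * c1 ^ 2) : ℝ) : ℂ) ^ 2
      = (r : ℂ) ^ 2 + (1 - (p : ℂ)) ^ 4 * (c1 : ℂ) ^ 2 := by
    have h : Real.sqrt (r ^ 2 + (1 - p) ^ 4 * c1 ^ 2) ^ 2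
        = r ^ 2 + (1 - p) ^ 4 * c1 ^ 2 := Real.sq_sqrt (by positivity)
    exact_mod_cast h
  generalize Real.sqrt (r ^ 2 + (1 - p) ^ 4 * c1 ^ 2) = q at hs ⊢
  rw [← Polynomial.roots_multiset_prod_X_sub_C
    ({_, _, _, _} : Multiset ℂ)]
  congr 1
  apply Polynomial.funext
  intro t
  rw [Matrix.eval_charpoly, det_X_shape]
  · simp [epsRho, rho, σ1, σ2, σ3]
    ring_nf
    have h4 : (q : ℂ) ^ 4 = ((r : ℂ) ^ 2 + (1 - (p : ℂ)) ^ 4 * (c1 : ℂ) ^ 2) ^ 2 := by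
      rw [← hs]; ring
    rw [h4, hs]
    ring
  all_goals simp [epsRho, rho, σ1, σ2, σ3]
end
end

section
/- Let r and c₃ be real numbers with |r| < 1 and |c₃| < 1, and set s = c₃·r. Then S₁ := −[(1+r+s+c₃)/4]log₂[(1+r+s+c₃)/(2(1+s))] − [(1−r+s−c₃)/4]log₂[(1−r+s−c₃)/(2(1+s))] − [(1+r−s−c₃)/4]log₂[(1+r−s−c₃)/(2(1−s))] − [(1−r−s+c₃)/4]log₂[(1−r−s+c₃)/(2(1−s))] equals 1 + f(r) + f(c₃) − f(c₃r) (with the convention 0·log₂0 := 0). -/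
open Matrix Polynomial
open scoped Kronecker ComplexOrder

noncomputable section

/-- with s = c₃r, S₁ = 1 + f(r) + f(c₃) − f(c₃r). -/
theorem stmt12 (r c3 : ℝ) (hr : |r| < 1) (hc3 : |c3| < 1) (s : ℝ) (hs : s = c3 * r) :
    (-((1 + r + s + c3) / 4 * Real.logb 2 ((1 + r + s + c3) / (2 * (1 + s))))
        - (1 - r + s - c3) / 4 * Real.logb 2 ((1 - r + s - c3) / (2 * (1 + s)))
        - (1 + r - s - c3) / 4 * Real.logb 2 ((1 + r - s - c3) / (2 * (1 - s)))
        - (1 - r - s + c3) / 4 * Real.logb 2 ((1 - r - s + c3) / (2 * (1 - s)))) =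
    1 + f r + f c3 - f (c3 * r) := by
  subst hs
  obtain ⟨hr1, hr2⟩ := abs_lt.mp hr
  obtain ⟨hc1, hc2⟩ := abs_lt.mp hc3
  have a1 : 0 < 1 + r := by linarith
  have a2 : 0 < 1 - r := by linarith
  have b1 : 0 < 1 + c3 := by linarith
  have b2 : 0 < 1 - c3 := by linarith
  have d1 : 0 < 1 + c3 * r := by nlinarith [mul_pos a1 b1, mul_pos a2 b2]
  have d2 : 0 < 1 - c3 * r := by nlinarith [mul_pos a1 b2, mul_pos a2 b1]
  have key : ∀ x y z : ℝ, 0 < x → 0 < y → 0 < z →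
      Real.logb 2 (x * y / (2 * z)) =
        Real.logb 2 x + Real.logb 2 y - (1 + Real.logb 2 z) := by
    intro x y z hx hy hz
    rw [Real.logb_div (mul_pos hx hy).ne' (by positivity), Real.logb_mul hx.ne' hy.ne',
      Real.logb_mul (by norm_num) hz.ne', Real.logb_self_eq_one (by norm_num)]
  rw [show 1 + r + c3 * r + c3 = (1 + r) * (1 + c3) by ring,
    show 1 - r + c3 * r - c3 = (1 - r) * (1 - c3) by ring,
    show 1 + r - c3 * r - c3 = (1 + r) * (1 - c3) by ring,
    show 1 - r - c3 * r + c3 = (1 - r) * (1 + c3) by ring,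
    key _ _ _ a1 b1 d1, key _ _ _ a2 b2 d1, key _ _ _ a1 b2 d2, key _ _ _ a2 b1 d2]
  unfold f
  ring
end
end

section
/- Let r, c₁ be real numbers with r² + c₁² ≤ 1. Then the function p ↦ S₂(p) = 1 + f(√(r² + (1−p)⁴c₁²)) is monotonically increasing on [0,1]; that is, for all 0 ≤ p₁ ≤ p₂ ≤ 1, S₂(p₁) ≤ S₂(p₂). -/
open Matrix Polynomial
open scoped Kronecker ComplexOrder

noncomputable section

/-- Relation between `f` and the binary entropy. -/
theorem f_eq_binEntropy (t : ℝ) (h0 : 0 ≤ t) (h1 : t ≤ 1) :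
    f t = Real.binEntropy ((1 - t) / 2) / Real.log 2 - 1 := by
  have hl : Real.log 2 ≠ 0 := (Real.log_pos one_lt_two).ne'
  have e : 1 - (1 - t) / 2 = (1 + t) / 2 := by ring
  have hp : (1 + t) ≠ 0 := by linarith
  rw [Real.binEntropy_eq_negMulLog_add_negMulLog_one_sub, e]
  unfold f Real.negMulLog Real.logb
  rw [Real.log_div hp two_ne_zero]
  rcases h1.eq_or_lt with h | h
  · subst h
    norm_num
  · have hm : (1 - t) ≠ 0 := by linarith
    rw [Real.log_div hm two_ne_zero]
    field_simp
    ring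

/-- `f` is decreasing on `[0,1]`. -/
theorem f_anti (s t : ℝ) (h0 : 0 ≤ s) (hst : s ≤ t) (h1 : t ≤ 1) : f t ≤ f s := by
  rw [f_eq_binEntropy t (h0.trans hst) h1, f_eq_binEntropy s h0 (hst.trans h1)]
  have hl : 0 < Real.log 2 := Real.log_pos one_lt_two
  have := Real.binEntropy_strictMonoOn.monotoneOn
    (a := (1 - t) / 2) (b := (1 - s) / 2)
    ⟨by linarith, by norm_num; linarith⟩ ⟨by linarith, by norm_num; linarith⟩ (by linarith)
  gcongr

/-- p ↦ S₂(p) = 1 + f(√(r² + (1−p)⁴c₁²)) is monotonically increasing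
on [0,1]. -/
theorem stmt14 (r c1 : ℝ) (hrc : r ^ 2 + c1 ^ 2 ≤ 1)
    (p1 p2 : ℝ) (h0 : 0 ≤ p1) (h12 : p1 ≤ p2) (h1 : p2 ≤ 1) :
    1 + f (Real.sqrt (r ^ 2 + (1 - p1) ^ 4 * c1 ^ 2)) ≤
      1 + f (Real.sqrt (r ^ 2 + (1 - p2) ^ 4 * c1 ^ 2)) := by
  have hq : (1 - p2) ^ 4 ≤ (1 - p1) ^ 4 :=
    pow_le_pow_left₀ (by linarith) (by linarith) 4
  have hq1 : (1 - p1) ^ 4 ≤ 1 := pow_le_one₀ (by linarith) (by linarith)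
  have hc : 0 ≤ c1 ^ 2 := sq_nonneg c1
  have key := f_anti (Real.sqrt (r ^ 2 + (1 - p2) ^ 4 * c1 ^ 2))
    (Real.sqrt (r ^ 2 + (1 - p1) ^ 4 * c1 ^ 2)) (Real.sqrt_nonneg _)
    (Real.sqrt_le_sqrt (by nlinarith)) (Real.sqrt_le_one.mpr (by nlinarith))
  linarith
end
end
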